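/- Let p be a real polynomial in n variables, homogeneous of degree d ≥ 1, hyperbolic in direction e ∈ ℝⁿ with p(e) > 0, suppose Λ₊ is regular, and let 0 < α < √d. Then for every e' ∈ Λ₊₊, the dual cone of K_{e'}(α) with respect to the standard inner product satisfies K_{e'}(α)* := {y ∈ ℝⁿ : ⟨y, x⟩ ≥ 0 for all x ∈ K_{e'}(α)} = { H(e')·s : s ∈ K_{e'}(√(d−α²)) }. -/

import Mathlib

open scoped BigOperators

/-- The univariate polynomial `t ↦ p(t • e - x)` associated to a multivariate polynomial `p`,
a direction `e` and a point `x`. -/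
noncomputable def hypCharPoly {n : ℕ} (p : MvPolynomial (Fin n) ℝ) (e x : Fin n → ℝ) :
    Polynomial ℝ :=
  MvPolynomial.aeval (fun i => Polynomial.C (e i) * Polynomial.X - Polynomial.C (x i)) p

/-- `p` is a homogeneous polynomial of degree `d`, hyperbolic in direction `e`:
`p(e) ≠ 0` and for every `x` the polynomial `t ↦ p(t • e - x)` has `d` real roots
counted with multiplicity. -/
def IsHyperbolicPoly {n : ℕ} (p : MvPolynomial (Fin n) ℝ) (e : Fin n → ℝ) (d : ℕ) : Prop :=
  p.IsHomogeneous d ∧ MvPolynomial.eval e p ≠ 0 ∧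
    ∀ x : Fin n → ℝ, Multiset.card (hypCharPoly p e x).roots = d

/-- The (closed) hyperbolicity cone `Λ₊`: all hyperbolic eigenvalues are nonnegative. -/
def hypConeClosed {n : ℕ} (p : MvPolynomial (Fin n) ℝ) (e : Fin n → ℝ) : Set (Fin n → ℝ) :=
  {x | ∀ r ∈ (hypCharPoly p e x).roots, (0:ℝ) ≤ r}

/-- The open hyperbolicity cone `Λ₊₊`: all hyperbolic eigenvalues are positive. -/
def hypConeOpen {n : ℕ} (p : MvPolynomial (Fin n) ℝ) (e : Fin n → ℝ) : Set (Fin n → ℝ) :=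
  {x | ∀ r ∈ (hypCharPoly p e x).roots, (0:ℝ) < r}

/-- The gradient of `f(x) = -ln p(x)`, namely `g(x)ᵢ = -(∂ᵢ p)(x) / p(x)`. -/
noncomputable def gradNegLog {n : ℕ} (p : MvPolynomial (Fin n) ℝ) (x : Fin n → ℝ) :
    Fin n → ℝ :=
  fun i => -(MvPolynomial.eval x (MvPolynomial.pderiv i p)) / MvPolynomial.eval x p

/-- The Hessian of `f(x) = -ln p(x)`, namely
`H(x)ᵢⱼ = (∂ᵢp)(x)(∂ⱼp)(x)/p(x)² - (∂ᵢ∂ⱼp)(x)/p(x)`. -/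
noncomputable def hessNegLog {n : ℕ} (p : MvPolynomial (Fin n) ℝ) (x : Fin n → ℝ) :
    Matrix (Fin n) (Fin n) ℝ :=
  Matrix.of fun i j =>
    MvPolynomial.eval x (MvPolynomial.pderiv i p) * MvPolynomial.eval x (MvPolynomial.pderiv j p)
        / (MvPolynomial.eval x p) ^ 2
      - MvPolynomial.eval x (MvPolynomial.pderiv i (MvPolynomial.pderiv j p))
        / MvPolynomial.eval x p

/-- The local inner product `⟨u, v⟩_{e'} = uᵀ H(e') v`. -/
noncomputable def localIP {n : ℕ} (p : MvPolynomial (Fin n) ℝ) (e' u v : Fin n → ℝ) : ℝ :=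
  ∑ i, ∑ j, u i * hessNegLog p e' i j * v j

/-- The local norm `‖v‖_{e'} = ⟨v, v⟩_{e'}^{1/2}`. -/
noncomputable def localNorm {n : ℕ} (p : MvPolynomial (Fin n) ℝ) (e' v : Fin n → ℝ) : ℝ :=
  Real.sqrt (localIP p e' v v)

/-- The closed quadratic cone `K_{e'}(α) = {x : ⟨e', x⟩_{e'} ≥ α ‖x‖_{e'}}`. -/
noncomputable def quadCone {n : ℕ} (p : MvPolynomial (Fin n) ℝ) (e' : Fin n → ℝ) (α : ℝ) :
    Set (Fin n → ℝ) :=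
  {x | α * localNorm p e' x ≤ localIP p e' e' x}

/-- The hyperbolicity cone is regular: it contains no nonzero linear subspace. -/
def IsRegularCone {n : ℕ} (p : MvPolynomial (Fin n) ℝ) (e : Fin n → ℝ) : Prop :=
  ∀ W : Submodule ℝ (Fin n → ℝ), (W : Set (Fin n → ℝ)) ⊆ hypConeClosed p e → W = ⊥

/-- The univariate polynomial `t ↦ p(t • u + w)` over an `ℝ`-algebra. -/
noncomputable def linePoly {n : ℕ} {A : Type*} [CommRing A] [Algebra ℝ A]
    (p : MvPolynomial (Fin n) ℝ) (u w : Fin n → A) : Polynomial A :=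
  MvPolynomial.aeval (fun i => Polynomial.C (u i) * Polynomial.X + Polynomial.C (w i)) p

section Algebraic

variable {n d : ℕ} {A : Type*} [CommRing A]

lemma natDegree_le_and_coeff_prod_linear (m : Fin n → ℕ) (u w : Fin n → A) (s : Finset (Fin n)) :
    (∏ i ∈ s, (Polynomial.C (u i) * Polynomial.X + Polynomial.C (w i)) ^ m i).natDegree
        ≤ ∑ i ∈ s, m i ∧
      (∏ i ∈ s, (Polynomial.C (u i) * Polynomial.X + Polynomial.C (w i)) ^ m i).coeff
        (∑ i ∈ s, m i) = ∏ i ∈ s, u i ^ m i := by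
  induction s using Finset.induction_on with
  | empty => simp
  | insert a s ha ih =>
    have hlin : (Polynomial.C (u a) * Polynomial.X + Polynomial.C (w a)).natDegree ≤ 1 := by
      compute_degree
    have hpow : ((Polynomial.C (u a) * Polynomial.X + Polynomial.C (w a)) ^ m a).natDegree
        ≤ m a := by
      simpa using Polynomial.natDegree_pow_le_of_le (m a) hlin
    have hcoeff : ((Polynomial.C (u a) * Polynomial.X + Polynomial.C (w a)) ^ m a).coeff (m a)
        = u a ^ m a := by
      have h := Polynomial.coeff_pow_of_natDegree_le (m := m a) hlin
      simpa [Polynomial.coeff_X, Polynomial.coeff_C] using h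
    rw [Finset.prod_insert ha, Finset.sum_insert ha, Finset.prod_insert ha]
    refine ⟨Polynomial.natDegree_mul_le_of_le hpow ih.1, ?_⟩
    rw [Polynomial.coeff_mul_add_eq_of_natDegree_le hpow ih.1, hcoeff, ih.2]

variable [Algebra ℝ A]

lemma eval_linePoly (p : MvPolynomial (Fin n) ℝ) (u w : Fin n → A) (t : A) :
    (linePoly p u w).eval t = MvPolynomial.aeval (t • u + w) p := by
  have h := MvPolynomial.map_aeval
    (fun i => Polynomial.C (u i) * Polynomial.X + Polynomial.C (w i)) (Polynomial.evalRingHom t) p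
  rw [Polynomial.coe_evalRingHom] at h
  rw [linePoly, h, MvPolynomial.aeval_def]
  have h1 : (Polynomial.evalRingHom t).comp (algebraMap ℝ (Polynomial A)) = algebraMap ℝ A := by
    exact RingHom.ext fun r => by simp [Polynomial.algebraMap_apply]
  rw [h1]
  refine congrArg (fun g => MvPolynomial.eval₂ _ g p) (funext fun i => ?_)
  simp [mul_comm t]

lemma hypCharPoly_eq_linePoly (p : MvPolynomial (Fin n) ℝ) (e x : Fin n → ℝ) :
    hypCharPoly p e x = linePoly p e (-x) := by
  simp [hypCharPoly, linePoly, sub_eq_add_neg]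

lemma aeval_smul_of_isHomogeneous {p : MvPolynomial (Fin n) ℝ} (hp : p.IsHomogeneous d)
    (c : A) (z : Fin n → A) :
    MvPolynomial.aeval (c • z) p = c ^ d * MvPolynomial.aeval z p := by
  rw [MvPolynomial.aeval_def, MvPolynomial.aeval_def, MvPolynomial.eval₂_eq',
    MvPolynomial.eval₂_eq', Finset.mul_sum]
  refine Finset.sum_congr rfl fun m hm => ?_
  have hdeg : ∑ i, m i = d := by
    rw [← Finsupp.degree_eq_sum, hp.degree_eq_sum_deg_support hm, Finsupp.degree_apply]
  simp only [Pi.smul_apply, smul_eq_mul, mul_pow, Finset.prod_mul_distrib,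
    Finset.prod_pow_eq_pow_sum, hdeg]
  ring

lemma natDegree_linePoly_le {p : MvPolynomial (Fin n) ℝ} (hp : p.IsHomogeneous d)
    (u w : Fin n → A) : (linePoly p u w).natDegree ≤ d := by
  rw [linePoly, MvPolynomial.aeval_def, MvPolynomial.eval₂_eq']
  refine Polynomial.natDegree_sum_le_of_forall_le _ _ fun m hm => ?_
  have hdeg : ∑ i, m i = d := by
    rw [← Finsupp.degree_eq_sum, hp.degree_eq_sum_deg_support hm, Finsupp.degree_apply]
  rw [Polynomial.algebraMap_apply, ← hdeg]
  exact (Polynomial.natDegree_C_mul_le _ _).trans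
    (natDegree_le_and_coeff_prod_linear m u w Finset.univ).1

lemma coeff_linePoly {p : MvPolynomial (Fin n) ℝ} (hp : p.IsHomogeneous d)
    (u w : Fin n → A) : (linePoly p u w).coeff d = MvPolynomial.aeval u p := by
  rw [linePoly, MvPolynomial.aeval_def, MvPolynomial.aeval_def, MvPolynomial.eval₂_eq',
    MvPolynomial.eval₂_eq', Polynomial.finsetSum_coeff]
  refine Finset.sum_congr rfl fun m hm => ?_
  have hdeg : ∑ i, m i = d := by
    rw [← Finsupp.degree_eq_sum, hp.degree_eq_sum_deg_support hm, Finsupp.degree_apply]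
  rw [Polynomial.algebraMap_apply, Polynomial.coeff_C_mul, ← hdeg,
    (natDegree_le_and_coeff_prod_linear m u w Finset.univ).2]

lemma derivative_linePoly (p : MvPolynomial (Fin n) ℝ) (u w : Fin n → A) :
    Polynomial.derivative (linePoly p u w) =
      ∑ i, Polynomial.C (u i) * linePoly (MvPolynomial.pderiv i p) u w := by
  induction p using MvPolynomial.induction_on with
  | C a => simp [linePoly, Polynomial.algebraMap_apply]
  | add p q hp hq =>
    simp only [linePoly, map_add, mul_add, Finset.sum_add_distrib] at hp hq ⊢
    rw [hp, hq]
  | mul_X p j hp =>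
    simp only [linePoly] at hp ⊢
    have hX : ∀ i, MvPolynomial.pderiv i (MvPolynomial.X j : MvPolynomial (Fin n) ℝ)
        = MvPolynomial.C (if i = j then 1 else 0) := by
      intro i
      rw [MvPolynomial.pderiv_X, Pi.single_apply]
      split_ifs <;> simp_all
    simp only [map_mul, MvPolynomial.aeval_X, Polynomial.derivative_mul, hp, Derivation.leibniz,
      smul_eq_mul, map_add, mul_add, Finset.sum_add_distrib, hX, MvPolynomial.aeval_C]
    rw [Finset.sum_eq_single (s := Finset.univ) (a := j) (f := fun i => Polynomial.C (u i) *
      (_ * algebraMap ℝ (Polynomial A) (if i = j then 1 else 0)))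
      (by intro b _ hb; simp [hb]) (by simp)]
    simp only [Polynomial.derivative_C, Polynomial.derivative_X, Finset.sum_mul, if_true, map_one,
      zero_mul, mul_zero, zero_add, mul_one, add_zero]
    rw [add_right_comm, add_comm, ← Finset.sum_add_distrib]
    exact congrArg₂ (· + ·) (mul_comm _ _) (Finset.sum_congr rfl fun i _ => by ring)

lemma aeval_ofReal (p : MvPolynomial (Fin n) ℝ) (x : Fin n → ℝ) :
    MvPolynomial.aeval (fun i => (x i : ℂ)) p = (MvPolynomial.eval x p : ℂ) := by
  have h := MvPolynomial.aeval_algebraMap_apply ℂ x p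
  simpa [MvPolynomial.aeval_eq_eval, Function.comp_def] using h

end Algebraic
section Stability

open Filter Topology

variable {n d : ℕ}

/-- The complexification of a real vector. -/
def complexify (x : Fin n → ℝ) : Fin n → ℂ := fun i => (x i : ℂ)

lemma complexify_add (x y : Fin n → ℝ) :
    complexify (x + y) = complexify x + complexify y := by
  ext i; simp [complexify]

lemma complexify_neg (x : Fin n → ℝ) : complexify (-x) = -complexify x := by
  ext i; simp [complexify]

lemma complexify_smul (c : ℝ) (x : Fin n → ℝ) :
    complexify (c • x) = (c : ℂ) • complexify x := by
  ext i; simp [complexify]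

lemma aeval_complexify (p : MvPolynomial (Fin n) ℝ) (x : Fin n → ℝ) :
    MvPolynomial.aeval (complexify x) p = (MvPolynomial.eval x p : ℂ) :=
  aeval_ofReal p x

lemma continuous_aeval_complex (p : MvPolynomial (Fin n) ℝ) :
    Continuous fun z : Fin n → ℂ => MvPolynomial.aeval z p := by
  simp only [MvPolynomial.aeval_def, ← MvPolynomial.eval_map]
  exact MvPolynomial.continuous_eval _

lemma im_pow_card_le_norm_prod {t : ℂ} (ht : 0 ≤ t.im) (s : Multiset ℂ)
    (hs : ∀ r ∈ s, r.im ≤ 0) : t.im ^ s.card ≤ ‖(s.map (t - ·)).prod‖ := by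
  induction s using Multiset.induction_on with
  | empty => simp
  | cons a s ih =>
    rw [Multiset.card_cons, Multiset.map_cons, Multiset.prod_cons, norm_mul, pow_succ']
    have ha := hs a (Multiset.mem_cons_self a s)
    have h1 : t.im ≤ ‖t - a‖ := by
      refine le_trans ?_ ((le_abs_self _).trans (Complex.abs_im_le_norm (t - a)))
      rw [Complex.sub_im]
      linarith
    exact mul_le_mul h1 (ih fun r hr => hs r (Multiset.mem_cons_of_mem hr)) (by positivity)
      (by positivity)

/-- A polynomial without zeros on the open upper half-plane grows at least like the power of the
imaginary part given by its degree. -/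
lemma norm_aeval_ge_of_ne_zero {p : MvPolynomial (Fin n) ℝ} (hp : p.IsHomogeneous d)
    (u w : Fin n → ℂ) (h : ∀ t : ℂ, 0 < t.im → MvPolynomial.aeval (t • u + w) p ≠ 0)
    (t : ℂ) (ht : 0 ≤ t.im) :
    ‖MvPolynomial.aeval u p‖ * t.im ^ d ≤ ‖MvPolynomial.aeval (t • u + w) p‖ := by
  by_cases hu : MvPolynomial.aeval u p = 0
  · simp [hu]
  have hc : (linePoly p u w).coeff d ≠ 0 := by rwa [coeff_linePoly hp]
  have hdeg : (linePoly p u w).natDegree = d :=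
    le_antisymm (natDegree_linePoly_le hp u w) (Polynomial.le_natDegree_of_ne_zero hc)
  have hsplit := IsAlgClosed.splits (linePoly p u w)
  have hcard := hsplit.natDegree_eq_card_roots
  have heval := hsplit.eval_eq_prod_roots t
  rw [eval_linePoly, Polynomial.leadingCoeff, hdeg, coeff_linePoly hp] at heval
  rw [heval, norm_mul]
  refine mul_le_mul_of_nonneg_left ?_ (norm_nonneg _)
  rw [← hdeg, hcard]
  refine im_pow_card_le_norm_prod ht _ fun r hr => ?_
  by_contra! hr'
  refine h r hr' ?_
  rw [← eval_linePoly]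
  exact Polynomial.isRoot_of_mem_roots hr

/-- Zeros of a line restriction cannot enter the closed upper half-plane along a one-parameter
family unless they cross the real axis. -/
lemma aeval_ne_zero_of_homotopy {p : MvPolynomial (Fin n) ℝ} (hp : p.IsHomogeneous d)
    {u w v : Fin n → ℂ} (hu : MvPolynomial.aeval u p ≠ 0)
    (hreal : ∀ s t : ℝ, MvPolynomial.aeval ((t : ℂ) • u + (w + (s : ℂ) • v)) p ≠ 0)
    (h0 : ∀ t : ℂ, 0 ≤ t.im → MvPolynomial.aeval (t • u + w) p ≠ 0)
    (s : ℝ) (t : ℂ) (ht : 0 ≤ t.im) :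
    MvPolynomial.aeval (t • u + (w + (s : ℂ) • v)) p ≠ 0 := by
  set S : Set ℝ :=
    {s | ∀ t : ℂ, 0 ≤ t.im → MvPolynomial.aeval (t • u + (w + (s : ℂ) • v)) p ≠ 0} with hS
  have hcont := continuous_aeval_complex p
  have hclosed : IsClosed S := by
    have hS' : S = ⋂ t : ℂ, ⋂ _ : 0 < t.im, {s : ℝ | ‖MvPolynomial.aeval u p‖ * t.im ^ d ≤
        ‖MvPolynomial.aeval (t • u + (w + (s : ℂ) • v)) p‖} := by
      ext s
      simp only [Set.mem_iInter, Set.mem_ofPred_eq, hS]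
      refine ⟨fun h t ht => norm_aeval_ge_of_ne_zero hp u _ (fun t ht => h t ht.le) t ht.le,
        fun h t ht => ?_⟩
      rcases ht.eq_or_lt with ht | ht
      · have htr : t = (t.re : ℂ) := Complex.ext (by simp) (by simp [← ht])
        rw [htr]
        exact hreal s t.re
      · have := h t ht
        rw [← norm_pos_iff]
        exact lt_of_lt_of_le (mul_pos (norm_pos_iff.2 hu) (pow_pos ht d)) this
    rw [hS']
    refine isClosed_iInter fun t => isClosed_iInter fun _ => isClosed_le continuous_const ?_
    exact (hcont.comp (by fun_prop)).norm
  have hopen : IsOpen S := by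
    rw [isOpen_iff_eventually]
    intro s hs
    have hfar : ∀ᶠ x : ℝ × ℂ in 𝓝 (s, 0),
        MvPolynomial.aeval (u + x.2 • (w + (x.1 : ℂ) • v)) p ≠ 0 := by
      have hc : Continuous fun x : ℝ × ℂ =>
          MvPolynomial.aeval (u + x.2 • (w + (x.1 : ℂ) • v)) p :=
        hcont.comp (by fun_prop)
      refine hc.continuousAt.eventually_ne ?_
      simpa using hu
    rw [nhds_prod_eq] at hfar
    obtain ⟨P, hP, Q, hQ, hPQ⟩ := eventually_prod_iff.1 hfar
    obtain ⟨ε, hε, hball⟩ := Metric.eventually_nhds_iff.1 hQ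
    have hK : IsCompact (Metric.closedBall (0 : ℂ) (2 / ε) ∩ {t : ℂ | 0 ≤ t.im}) :=
      (isCompact_closedBall _ _).inter_right (isClosed_le continuous_const Complex.continuous_im)
    have hnear := hK.eventually_forall_of_forall_eventually (x₀ := s)
      (P := fun s' t => MvPolynomial.aeval (t • u + (w + (s' : ℂ) • v)) p ≠ 0) (by
        intro t ht
        have hc : Continuous fun x : ℝ × ℂ =>
            MvPolynomial.aeval (x.2 • u + (w + (x.1 : ℂ) • v)) p :=
          hcont.comp (by fun_prop)
        exact hc.continuousAt.eventually_ne (hs t ht.2))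
    filter_upwards [hP, hnear] with s' h1 h2 t ht
    by_cases htb : ‖t‖ ≤ 2 / ε
    · exact h2 t ⟨by simpa using htb, ht⟩
    · push Not at htb
      have htpos : 0 < ‖t‖ := lt_trans (by positivity) htb
      have ht0 : t ≠ 0 := norm_pos_iff.1 htpos
      have hQt : Q t⁻¹ := by
        refine hball ?_
        rw [dist_zero_right, norm_inv, inv_lt_comm₀ htpos hε]
        refine lt_trans ?_ htb
        rw [inv_eq_one_div]
        gcongr
        norm_num
      have := hPQ h1 hQt
      have heq : t • u + (w + (s' : ℂ) • v) = t • (u + t⁻¹ • (w + (s' : ℂ) • v)) := by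
        rw [smul_add, smul_smul, mul_inv_cancel₀ ht0, one_smul]
      rw [heq, aeval_smul_of_isHomogeneous hp]
      exact mul_ne_zero (pow_ne_zero _ ht0) this
  have huniv : S = Set.univ :=
    IsClopen.eq_univ ⟨hclosed, hopen⟩ ⟨0, fun t ht => by simpa using h0 t ht⟩
  have : s ∈ S := huniv ▸ Set.mem_univ s
  exact this t ht

variable {p : MvPolynomial (Fin n) ℝ} {e : Fin n → ℝ}

lemma aeval_complexify_ne_zero {x : Fin n → ℝ} (hx : MvPolynomial.eval x p ≠ 0) :
    MvPolynomial.aeval (complexify x) p ≠ 0 := by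
  rw [aeval_complexify]
  exact_mod_cast hx

lemma hypCharPoly_ne_zero (hp : IsHyperbolicPoly p e d) (x : Fin n → ℝ) :
    hypCharPoly p e x ≠ 0 := by
  intro h
  have hc := coeff_linePoly hp.1 e (-x)
  rw [← hypCharPoly_eq_linePoly, h] at hc
  exact hp.2.1 (by simpa [MvPolynomial.aeval_eq_eval] using hc.symm)

lemma mem_roots_hypCharPoly_iff (hp : IsHyperbolicPoly p e d) (x : Fin n → ℝ) (r : ℝ) :
    r ∈ (hypCharPoly p e x).roots ↔ MvPolynomial.eval (r • e - x) p = 0 := by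
  rw [Polynomial.mem_roots (hypCharPoly_ne_zero hp x), Polynomial.IsRoot.def,
    hypCharPoly_eq_linePoly, eval_linePoly, MvPolynomial.aeval_eq_eval, sub_eq_add_neg]

/-- All complex zeros of a hyperbolic polynomial along its direction are real. -/
lemma exists_mem_roots_of_aeval_eq_zero (hp : IsHyperbolicPoly p e d) (x : Fin n → ℝ) (τ : ℂ)
    (h : MvPolynomial.aeval (τ • complexify e - complexify x) p = 0) :
    ∃ r ∈ (hypCharPoly p e x).roots, τ = (r : ℂ) := by
  have hne := hypCharPoly_ne_zero hp x
  have hdeg : (hypCharPoly p e x).natDegree = d := by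
    refine le_antisymm ?_ (hp.2.2 x ▸ Polynomial.card_roots' _)
    rw [hypCharPoly_eq_linePoly]
    exact natDegree_linePoly_le hp.1 _ _
  have hsplit : (hypCharPoly p e x).Splits :=
    Polynomial.splits_iff_card_roots.2 (by rw [hp.2.2 x, hdeg])
  have hmap : (hypCharPoly p e x).map (algebraMap ℝ ℂ)
      = linePoly p (complexify e) (-complexify x) := by
    refine Polynomial.eq_of_infinite_eval_eq _ _
      ((Set.infinite_range_of_injective Complex.ofReal_injective).mono ?_)
    rintro _ ⟨r, rfl⟩
    change Polynomial.eval (r : ℂ) _ = Polynomial.eval (r : ℂ) _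
    rw [eval_linePoly, ← complexify_smul, ← complexify_neg, ← complexify_add, aeval_complexify,
      hypCharPoly_eq_linePoly]
    have h1 := Polynomial.eval_map_algebraMap (B := ℂ) (linePoly p e (-x)) (r : ℂ)
    have h2 := Polynomial.aeval_algebraMap_apply ℂ r (linePoly p e (-x))
    rw [h1]
    refine h2.trans ?_
    rw [Polynomial.coe_aeval_eq_eval, eval_linePoly, MvPolynomial.aeval_eq_eval]
    rfl
  have hmem : τ ∈ ((hypCharPoly p e x).map (algebraMap ℝ ℂ)).roots := by
    rw [Polynomial.mem_roots ((Polynomial.map_ne_zero_iff (algebraMap ℝ ℂ).injective).2 hne),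
      Polynomial.IsRoot.def, hmap, eval_linePoly, ← sub_eq_add_neg, h]
  rw [hsplit.roots_map, Multiset.mem_map] at hmem
  obtain ⟨r, hr, hrτ⟩ := hmem
  exact ⟨r, hr, hrτ.symm⟩

lemma aeval_ne_zero_of_im_ne_zero (hp : IsHyperbolicPoly p e d) (x : Fin n → ℝ) {τ : ℂ}
    (hτ : τ.im ≠ 0) : MvPolynomial.aeval (τ • complexify e + complexify x) p ≠ 0 := by
  intro h
  rw [← neg_neg (complexify x), ← complexify_neg, ← sub_eq_add_neg] at h
  obtain ⟨r, -, rfl⟩ := exists_mem_roots_of_aeval_eq_zero hp _ τ h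
  exact hτ (Complex.ofReal_im r)

lemma eval_ne_zero_of_mem_hypConeOpen (hp : IsHyperbolicPoly p e d) {a : Fin n → ℝ}
    (ha : a ∈ hypConeOpen p e) : MvPolynomial.eval a p ≠ 0 := by
  intro h
  refine lt_irrefl (0 : ℝ) (ha 0 ((mem_roots_hypCharPoly_iff hp a 0).2 ?_))
  have := aeval_smul_of_isHomogeneous hp.1 (-1 : ℝ) a
  simp only [MvPolynomial.aeval_eq_eval] at this
  simpa [h] using this

lemma aeval_perturbed_ne_zero (hp : IsHyperbolicPoly p e d) {a : Fin n → ℝ}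
    (ha : a ∈ hypConeOpen p e) (x : Fin n → ℝ) {β : ℝ} (hβ : 0 < β) (t : ℂ) (ht : 0 ≤ t.im) :
    MvPolynomial.aeval (t • complexify a + ((β * Complex.I) • complexify e + complexify x)) p
      ≠ 0 := by
  have hβI : ((β : ℂ) * Complex.I).im ≠ 0 := by simpa using hβ.ne'
  have hmain := aeval_ne_zero_of_homotopy hp.1 (u := complexify a)
    (w := ((β : ℂ) * Complex.I) • complexify e) (v := complexify x)
    (aeval_complexify_ne_zero (eval_ne_zero_of_mem_hypConeOpen hp ha)) (fun s r => by
      have := aeval_ne_zero_of_im_ne_zero hp (r • a + s • x) hβI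
      rw [complexify_add, complexify_smul, complexify_smul] at this
      rwa [add_left_comm]) (fun t ht => by
      by_cases ht0 : t = 0
      · rw [ht0, zero_smul, zero_add, aeval_smul_of_isHomogeneous hp.1]
        exact mul_ne_zero (pow_ne_zero _ fun h => hβI (by rw [h]; rfl))
          (aeval_complexify_ne_zero hp.2.1)
      · intro h
        have heq : t • complexify a + ((β : ℂ) * Complex.I) • complexify e =
            (-t) • ((-(β * Complex.I / t)) • complexify e - complexify a) := by
          rw [smul_sub, smul_smul, neg_mul_neg, mul_div_cancel₀ _ ht0, neg_smul, sub_neg_eq_add,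
            add_comm]
        rw [heq, aeval_smul_of_isHomogeneous hp.1] at h
        have h2 := (mul_eq_zero.1 h).resolve_left (pow_ne_zero _ (neg_ne_zero.2 ht0))
        obtain ⟨r, hr, hrt⟩ := exists_mem_roots_of_aeval_eq_zero hp _ _ h2
        have hrpos := ha r hr
        have hmul : -(β * Complex.I) = r * t := by
          rw [← hrt]; field_simp
        have him := congrArg Complex.im hmul
        simp only [Complex.neg_im, Complex.mul_im, Complex.ofReal_re, Complex.I_im,
          Complex.ofReal_im, Complex.I_re] at him
        nlinarith [mul_nonneg hrpos.le ht]) 1 t ht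
  simpa using hmain

/-- Gårding: a hyperbolic polynomial is hyperbolic in every direction of its open cone. -/
lemma aeval_cone_ne_zero (hp : IsHyperbolicPoly p e d) {a : Fin n → ℝ}
    (ha : a ∈ hypConeOpen p e) (x : Fin n → ℝ) {t : ℂ} (ht : t.im ≠ 0) :
    MvPolynomial.aeval (t • complexify a + complexify x) p ≠ 0 := by
  have hpos : ∀ (x : Fin n → ℝ) (t : ℂ), 0 < t.im →
      MvPolynomial.aeval (t • complexify a + complexify x) p ≠ 0 := by
    intro x t ht
    have hc : Continuous fun β : ℝ => ‖MvPolynomial.aeval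
        (t • complexify a + (((β : ℂ) * Complex.I) • complexify e + complexify x)) p‖ :=
      ((continuous_aeval_complex p).comp (by fun_prop)).norm
    have hlim := (hc.tendsto 0).mono_left (nhdsWithin_le_nhds (s := Set.Ioi 0))
    have hge := ge_of_tendsto (b := ‖MvPolynomial.aeval (complexify a) p‖ * t.im ^ d) hlim (by
      filter_upwards [self_mem_nhdsWithin] with β hβ
      exact norm_aeval_ge_of_ne_zero hp.1 _ _
        (fun t ht => aeval_perturbed_ne_zero hp ha x hβ t ht.le) t ht.le)
    rw [Complex.ofReal_zero, zero_mul, zero_smul, zero_add] at hge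
    rw [← norm_pos_iff]
    refine lt_of_lt_of_le (mul_pos (norm_pos_iff.2 ?_) (pow_pos ht d)) hge
    exact aeval_complexify_ne_zero (eval_ne_zero_of_mem_hypConeOpen hp ha)
  rcases ht.lt_or_gt with ht | ht
  · have heq : t • complexify a + complexify x
        = (-1 : ℂ) • ((-t) • complexify a + complexify (-x)) := by
      rw [complexify_neg]
      module
    rw [heq, aeval_smul_of_isHomogeneous hp.1]
    exact mul_ne_zero (pow_ne_zero _ (by norm_num)) (hpos (-x) (-t) (by simpa using ht))
  · exact hpos x t ht

/-- Factorization of `t ↦ p(a + t • v)` for `a` in the open cone, with real coefficients. -/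
lemma linePoly_eq_prod_of_mem_hypConeOpen (hp : IsHyperbolicPoly p e d) {a : Fin n → ℝ}
    (ha : a ∈ hypConeOpen p e) (v : Fin n → ℝ) :
    ∃ s : Multiset ℂ, (∀ r ∈ s, r.im = 0) ∧
      linePoly p (complexify v) (complexify a) = Polynomial.C (MvPolynomial.aeval (complexify a) p)
        * (s.map fun r => 1 - Polynomial.C r * Polynomial.X).prod := by
  have hc := aeval_complexify_ne_zero (eval_ne_zero_of_mem_hypConeOpen hp ha)
  set L := linePoly p (complexify a) (complexify v) with hL
  have hcoeff : L.coeff d = MvPolynomial.aeval (complexify a) p := coeff_linePoly hp.1 _ _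
  have hdeg : L.natDegree = d := le_antisymm (natDegree_linePoly_le hp.1 _ _)
    (Polynomial.le_natDegree_of_ne_zero (by rwa [hcoeff]))
  have hsplit := IsAlgClosed.splits L
  have hcard : L.roots.card = d := by rw [← hsplit.natDegree_eq_card_roots, hdeg]
  refine ⟨L.roots, fun r hr => ?_, ?_⟩
  · by_contra him
    refine aeval_cone_ne_zero hp ha v him ?_
    rw [← eval_linePoly]
    exact Polynomial.isRoot_of_mem_roots hr
  · refine Polynomial.eq_of_infinite_eval_eq _ _
      ((Set.finite_singleton (0 : ℂ)).infinite_compl.mono fun t ht => ?_)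
    have ht0 : t ≠ 0 := ht
    have heq : t • complexify v + complexify a = t • (t⁻¹ • complexify a + complexify v) := by
      rw [smul_add, smul_smul, mul_inv_cancel₀ ht0, one_smul, add_comm]
    have heval := hsplit.eval_eq_prod_roots t⁻¹
    rw [eval_linePoly, Polynomial.leadingCoeff, hdeg, hcoeff] at heval
    have hprod : ∀ s : Multiset ℂ, (s.map fun r => 1 - Polynomial.C r * Polynomial.X).prod.eval t
        = t ^ s.card * (s.map (t⁻¹ - ·)).prod := by
      intro s
      induction s using Multiset.induction_on with
      | empty => simp
      | cons b s ih =>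
        rw [Multiset.map_cons, Multiset.prod_cons, Polynomial.eval_mul, ih, Multiset.map_cons,
          Multiset.prod_cons, Multiset.card_cons]
        simp only [Polynomial.eval_sub, Polynomial.eval_one, Polynomial.eval_mul,
          Polynomial.eval_C, Polynomial.eval_X]
        have hb : t * (t⁻¹ - b) = 1 - b * t := by field_simp
        rw [← hb]
        ring
    change Polynomial.eval t _ = Polynomial.eval t _
    rw [eval_linePoly, heq, aeval_smul_of_isHomogeneous hp.1, heval, Polynomial.eval_mul,
      Polynomial.eval_C, hprod, hcard]
    ring

end Stability

section Hessian

variable {n d : ℕ} {p : MvPolynomial (Fin n) ℝ} {e : Fin n → ℝ}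

lemma pderiv_comm (i j : Fin n) (q : MvPolynomial (Fin n) ℝ) :
    MvPolynomial.pderiv i (MvPolynomial.pderiv j q)
      = MvPolynomial.pderiv j (MvPolynomial.pderiv i q) := by
  have h :
      ⁅(MvPolynomial.pderiv i : Derivation ℝ (MvPolynomial (Fin n) ℝ) (MvPolynomial (Fin n) ℝ)),
      (MvPolynomial.pderiv j : Derivation ℝ (MvPolynomial (Fin n) ℝ) (MvPolynomial (Fin n) ℝ))⁆
        = 0 := by
    refine MvPolynomial.derivation_ext fun k => ?_
    rw [Derivation.commutator_apply, MvPolynomial.pderiv_X, MvPolynomial.pderiv_X]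
    simp only [Pi.single_apply]
    split_ifs <;> simp
  have := congrArg (fun D => D q) h
  simpa [Derivation.commutator_apply, sub_eq_zero] using this

lemma hessNegLog_comm (a : Fin n → ℝ) (i j : Fin n) :
    hessNegLog p a i j = hessNegLog p a j i := by
  simp only [hessNegLog, Matrix.of_apply]
  rw [pderiv_comm i j, mul_comm (MvPolynomial.eval a (MvPolynomial.pderiv i p))]

lemma localIP_eq_derivative (a v : Fin n → ℝ) :
    (localIP p a v v : ℂ) =
      (Polynomial.derivative (linePoly p (complexify v) (complexify a))).eval 0 ^ 2
          / MvPolynomial.aeval (complexify a) p ^ 2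
        - (Polynomial.derivative
            (Polynomial.derivative (linePoly p (complexify v) (complexify a)))).eval 0
          / MvPolynomial.aeval (complexify a) p := by
  have h1 : (Polynomial.derivative (linePoly p (complexify v) (complexify a))).eval 0
      = ((∑ i, v i * MvPolynomial.eval a (MvPolynomial.pderiv i p) : ℝ) : ℂ) := by
    simp [derivative_linePoly, Polynomial.eval_finsetSum, eval_linePoly, aeval_complexify]
    rfl
  have h2 : (Polynomial.derivative
      (Polynomial.derivative (linePoly p (complexify v) (complexify a)))).eval 0
      = ((∑ i, ∑ j, v i * v j *
          MvPolynomial.eval a (MvPolynomial.pderiv i (MvPolynomial.pderiv j p)) : ℝ) : ℂ) := by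
    rw [Finset.sum_comm]
    simp [derivative_linePoly, Polynomial.eval_finsetSum, eval_linePoly, aeval_complexify,
      Finset.mul_sum]
    refine Finset.sum_congr rfl fun i _ => Finset.sum_congr rfl fun j _ => ?_
    simp only [complexify]
    ring
  rw [h1, h2, aeval_complexify, localIP]
  norm_cast
  rw [sq (∑ i, _), Finset.sum_mul_sum, Finset.sum_div, Finset.sum_div, ← Finset.sum_sub_distrib]
  refine Finset.sum_congr rfl fun i _ => ?_
  rw [Finset.sum_div, Finset.sum_div, ← Finset.sum_sub_distrib]
  refine Finset.sum_congr rfl fun j _ => ?_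
  simp only [hessNegLog, Matrix.of_apply]
  ring

lemma eval_zero_derivatives_prod (s : Multiset ℂ) :
    let Q := (s.map fun r => 1 - Polynomial.C r * Polynomial.X).prod
    Q.eval 0 = 1 ∧ (Polynomial.derivative Q).eval 0 = -s.sum ∧
      (Polynomial.derivative (Polynomial.derivative Q)).eval 0
        = s.sum ^ 2 - (s.map (· ^ 2)).sum := by
  induction s using Multiset.induction_on with
  | empty => simp
  | cons a s ih =>
    obtain ⟨h0, h1, h2⟩ := ih
    simp only [Multiset.map_cons, Multiset.prod_cons, Multiset.sum_cons] at h0 h1 h2 ⊢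
    refine ⟨by simp [h0], by simp [Polynomial.derivative_mul, h0, h1]; ring, ?_⟩
    simp [Polynomial.derivative_mul, h1, h2]
    ring

lemma localIP_eq_sum_sq {a v : Fin n → ℝ} {c : ℂ} (hc : c ≠ 0) {s : Multiset ℂ}
    (h : linePoly p (complexify v) (complexify a) =
      Polynomial.C c * (s.map fun r => 1 - Polynomial.C r * Polynomial.X).prod) :
    (localIP p a v v : ℂ) = (s.map (· ^ 2)).sum := by
  obtain ⟨h0, h1, h2⟩ := eval_zero_derivatives_prod s
  have hca : MvPolynomial.aeval (complexify a) p = c := by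
    have := congrArg (Polynomial.eval 0) h
    rw [eval_linePoly, Polynomial.eval_mul, h0] at this
    simpa using this
  rw [localIP_eq_derivative, h, hca, Polynomial.derivative_C_mul, Polynomial.derivative_C_mul,
    Polynomial.eval_mul, Polynomial.eval_mul, h1, h2, Polynomial.eval_C]
  field_simp
  ring

lemma localIP_self (hp : IsHyperbolicPoly p e d) {a : Fin n → ℝ} (ha : a ∈ hypConeOpen p e) :
    localIP p a a a = d := by
  have hc := aeval_complexify_ne_zero (eval_ne_zero_of_mem_hypConeOpen hp ha)
  have h := localIP_eq_sum_sq (p := p) (a := a) (v := a) hc (s := Multiset.replicate d (-1)) (by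
    refine Polynomial.funext fun t => ?_
    have heq : t • complexify a + complexify a = (t + 1) • complexify a := by module
    rw [eval_linePoly, heq, aeval_smul_of_isHomogeneous hp.1]
    rw [Multiset.map_replicate, Multiset.prod_replicate]
    simp only [Polynomial.eval_mul, Polynomial.eval_pow, Polynomial.eval_sub, Polynomial.eval_one,
      Polynomial.eval_C, Polynomial.eval_X]
    ring)
  have h' : (localIP p a a a : ℂ) = (d : ℂ) := by simpa using h
  exact_mod_cast h'

lemma sum_sq_re {s : Multiset ℂ} (hs : ∀ r ∈ s, r.im = 0) :
    0 ≤ (s.map (· ^ 2)).sum.re ∧ ((s.map (· ^ 2)).sum.re = 0 → ∀ r ∈ s, r = 0) := by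
  induction s using Multiset.induction_on with
  | empty => simp
  | cons a s ih =>
    obtain ⟨h1, h2⟩ := ih fun r hr => hs r (Multiset.mem_cons_of_mem hr)
    have ha := hs a (Multiset.mem_cons_self a s)
    have hre : (a ^ 2).re = a.re ^ 2 := by rw [sq, Complex.mul_re, ha]; ring
    rw [Multiset.map_cons, Multiset.sum_cons, Complex.add_re, hre]
    refine ⟨by positivity, fun h r hr => ?_⟩
    have hsq := sq_nonneg a.re
    rcases Multiset.mem_cons.1 hr with rfl | hr
    · exact Complex.ext (pow_eq_zero_iff two_ne_zero |>.1 (by linarith)) ha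
    · exact h2 (by linarith) r hr

lemma localIP_nonneg (hp : IsHyperbolicPoly p e d) {a : Fin n → ℝ} (ha : a ∈ hypConeOpen p e)
    (v : Fin n → ℝ) : 0 ≤ localIP p a v v := by
  obtain ⟨s, hs, h⟩ := linePoly_eq_prod_of_mem_hypConeOpen hp ha v
  have h1 := localIP_eq_sum_sq
    (aeval_complexify_ne_zero (eval_ne_zero_of_mem_hypConeOpen hp ha)) h
  rw [← Complex.ofReal_re (localIP p a v v), h1]
  exact (sum_sq_re hs).1

lemma eval_add_smul_of_localIP_eq_zero (hp : IsHyperbolicPoly p e d) {a : Fin n → ℝ}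
    (ha : a ∈ hypConeOpen p e) {v : Fin n → ℝ} (hv : localIP p a v v = 0) (t : ℂ) :
    MvPolynomial.aeval (t • complexify v + complexify a) p
      = MvPolynomial.aeval (complexify a) p := by
  obtain ⟨s, hs, h⟩ := linePoly_eq_prod_of_mem_hypConeOpen hp ha v
  have h1 := localIP_eq_sum_sq
    (aeval_complexify_ne_zero (eval_ne_zero_of_mem_hypConeOpen hp ha)) h
  have hzero := (sum_sq_re hs).2 (by rw [← h1, hv]; rfl)
  have hprod : (s.map fun r => 1 - Polynomial.C r * Polynomial.X).prod = 1 := by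
    refine Multiset.prod_eq_one fun q hq => ?_
    obtain ⟨r, hr, rfl⟩ := Multiset.mem_map.1 hq
    simp [hzero r hr]
  rw [← eval_linePoly, h, hprod, mul_one, Polynomial.eval_C]

open Filter Topology in
/-- A null direction of the Hessian has only nonnegative eigenvalues. -/
lemma smul_mem_hypConeClosed_of_localIP_eq_zero (hp : IsHyperbolicPoly p e d) {a : Fin n → ℝ}
    (ha : a ∈ hypConeOpen p e) {v : Fin n → ℝ} (hv : localIP p a v v = 0) (c : ℝ) :
    c • v ∈ hypConeClosed p e := by
  intro r hr
  by_contra! hr0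
  have hpa := aeval_complexify_ne_zero (eval_ne_zero_of_mem_hypConeOpen hp ha)
  have hpe := aeval_complexify_ne_zero hp.2.1
  have hI : MvPolynomial.aeval (Complex.I • complexify e) p ≠ 0 := by
    rw [aeval_smul_of_isHomogeneous hp.1]
    exact mul_ne_zero (pow_ne_zero _ Complex.I_ne_zero) hpe
  have hstab := aeval_ne_zero_of_homotopy hp.1 (u := Complex.I • complexify e)
    (w := -complexify a) (v := -complexify v) hI (fun s t => by
      have heq : (t : ℂ) • Complex.I • complexify e + (-complexify a + (s : ℂ) • -complexify v)
          = ((t : ℂ) * Complex.I) • complexify e + complexify (-(a + s • v)) := by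
        rw [complexify_neg, complexify_add, complexify_smul]
        module
      rw [heq]
      by_cases ht : t = 0
      · have heq' : ((t : ℂ) * Complex.I) • complexify e + complexify (-(a + s • v))
            = (-1 : ℂ) • ((s : ℂ) • complexify v + complexify a) := by
          rw [ht, complexify_neg, complexify_add, complexify_smul]
          simp only [Complex.ofReal_zero]
          module
        rw [heq', aeval_smul_of_isHomogeneous hp.1, eval_add_smul_of_localIP_eq_zero hp ha hv]
        exact mul_ne_zero (pow_ne_zero _ (by norm_num)) hpa
      · exact aeval_ne_zero_of_im_ne_zero hp _ (by simpa using ht)) (fun t ht h => by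
      rw [smul_smul, ← sub_eq_add_neg] at h
      obtain ⟨x, hx, hxt⟩ := exists_mem_roots_of_aeval_eq_zero hp _ _ h
      have hx0 := ha x hx
      have := congrArg Complex.re hxt
      simp at this
      linarith)
  have hbound : ∀ k : ℝ, 0 < k →
      ‖MvPolynomial.aeval (Complex.I • complexify e) p‖ * (-r) ^ d ≤
        ‖MvPolynomial.aeval ((r : ℂ) • complexify e - complexify (c • v)
          - (k : ℂ) • complexify a) p‖ := by
    intro k hk
    have hkC : (k : ℂ) ≠ 0 := by exact_mod_cast hk.ne'
    have him : (-((k⁻¹ * r : ℝ) : ℂ) * Complex.I).im = k⁻¹ * -r := by simp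
    have h1 := norm_aeval_ge_of_ne_zero hp.1 (Complex.I • complexify e)
      (-complexify a + ((k⁻¹ * c : ℝ) : ℂ) • -complexify v)
      (fun t ht => hstab _ t ht.le) (-((k⁻¹ * r : ℝ) : ℂ) * Complex.I)
      (by rw [him]; exact mul_nonneg (by positivity) (by linarith))
    have heq : (-((k⁻¹ * r : ℝ) : ℂ) * Complex.I) • Complex.I • complexify e
        + (-complexify a + ((k⁻¹ * c : ℝ) : ℂ) • -complexify v)
        = ((k⁻¹ : ℝ) : ℂ) • ((r : ℂ) • complexify e - complexify (c • v)
          - (k : ℂ) • complexify a) := by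
      rw [complexify_smul, smul_smul, mul_assoc, Complex.I_mul_I]
      push_cast
      rw [smul_sub, smul_smul _ (k : ℂ), inv_mul_cancel₀ hkC]
      module
    rw [heq, him, aeval_smul_of_isHomogeneous hp.1 ((k⁻¹ : ℝ) : ℂ), norm_mul, mul_pow, norm_pow,
      Complex.norm_real, Real.norm_of_nonneg (by positivity : 0 ≤ k⁻¹)] at h1
    have hkd : 0 < k⁻¹ ^ d := by positivity
    refine le_of_mul_le_mul_left ?_ hkd
    linarith
  have hc : Continuous fun k : ℝ => ‖MvPolynomial.aeval ((r : ℂ) • complexify e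
      - complexify (c • v) - (k : ℂ) • complexify a) p‖ :=
    ((continuous_aeval_complex p).comp (by fun_prop)).norm
  have hge := ge_of_tendsto ((hc.tendsto 0).mono_left (nhdsWithin_le_nhds (s := Set.Ioi 0)))
    (by filter_upwards [self_mem_nhdsWithin] with k hk using hbound k hk)
  have hroot := (mem_roots_hypCharPoly_iff hp _ r).1 hr
  have hzero : MvPolynomial.aeval ((r : ℂ) • complexify e - complexify (c • v)) p = 0 := by
    rw [sub_eq_add_neg, ← complexify_neg, ← complexify_smul, ← complexify_add, aeval_complexify,
      ← sub_eq_add_neg, hroot]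
    rfl
  rw [Complex.ofReal_zero, zero_smul, sub_zero, hzero, norm_zero] at hge
  exact absurd hge (not_le.2 (mul_pos (norm_pos_iff.2 hI) (pow_pos (by linarith) d)))

lemma eq_zero_of_localIP_eq_zero (hp : IsHyperbolicPoly p e d) (hreg : IsRegularCone p e)
    {a : Fin n → ℝ} (ha : a ∈ hypConeOpen p e) {v : Fin n → ℝ} (hv : localIP p a v v = 0) :
    v = 0 := by
  have h := hreg (Submodule.span ℝ {v}) fun x hx => by
    obtain ⟨c, rfl⟩ := Submodule.mem_span_singleton.1 hx
    exact smul_mem_hypConeClosed_of_localIP_eq_zero hp ha hv c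
  exact Submodule.span_singleton_eq_bot.1 h

end Hessian

section Duality

lemma mul_sqrt_le_iff {c q b : ℝ} (hc : 0 ≤ c) :
    c * √q ≤ b ↔ 0 ≤ b ∧ c ^ 2 * q ≤ b ^ 2 := by
  rw [← Real.sqrt_sq hc, ← Real.sqrt_mul (sq_nonneg c), Real.sqrt_sq hc, Real.sqrt_le_iff]

/-- The dual of a circular cone around `a`, with respect to a positive semidefinite form. -/
lemma dual_circular_cone_iff {V : Type*} [AddCommGroup V] [Module ℝ V]
    (B : LinearMap.BilinForm ℝ V) (hnonneg : ∀ x, 0 ≤ B x x) (hsymm : LinearMap.IsSymm B)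
    {a : V} {δ α : ℝ} (ha : B a a = δ) (hα : 0 < α) (hα' : α < √δ) (s : V) :
    (∀ x, α * √(B x x) ≤ B a x → 0 ≤ B s x) ↔ √(δ - α ^ 2) * √(B s s) ≤ B a s := by
  have hδα : α ^ 2 < δ := (Real.lt_sqrt hα.le).1 hα'
  have hδ : 0 < δ := lt_trans (by positivity) hδα
  have hκ : 0 < δ - α ^ 2 := by linarith
  -- coordinates along `a` and its orthogonal complement
  have hdecomp : ∀ x, ∃ (ξ : ℝ) (x' : V), x = ξ • a + x' ∧ B a x' = 0 := fun x =>
    ⟨B a x / δ, x - (B a x / δ) • a, by abel, by simp [ha, hδ.ne']⟩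
  have hcross : ∀ {σ ξ : ℝ} {s' x' : V}, B a s' = 0 → B a x' = 0 →
      B (σ • a + s') (ξ • a + x') = σ * ξ * δ + B s' x' := by
    intro σ ξ s' x' h1 h2
    have h3 : B s' a = 0 := (hsymm.eq a s').symm.trans h1
    simp [ha, h2, h3]
    ring
  have hax : ∀ {ξ : ℝ} {x' : V}, B a x' = 0 → B a (ξ • a + x') = ξ * δ := by
    intro ξ x' h
    simp [ha, h]
  rw [mul_sqrt_le_iff (Real.sqrt_nonneg _), Real.sq_sqrt hκ.le]
  obtain ⟨σ, s', rfl, hs'⟩ := hdecomp s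
  rw [hax hs', hcross hs' hs']
  have hN := hnonneg s'
  set N := B s' s' with hNdef
  constructor
  · intro h
    have hσ : 0 ≤ σ * δ := by
      have h1 := h a (by
        rw [mul_sqrt_le_iff hα.le, ha]
        exact ⟨hδ.le, by nlinarith⟩)
      have h2 : B s' a = 0 := (hsymm.eq a s').symm.trans hs'
      simpa [ha, h2] using h1
    refine ⟨hσ, ?_⟩
    have hσ0 : 0 ≤ σ := nonneg_of_mul_nonneg_left hσ hδ
    set ξ := α * √(N / (δ * (δ - α ^ 2))) with hξ
    have hξ0 : 0 ≤ ξ := by positivity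
    have hξ2 : ξ ^ 2 * (δ * (δ - α ^ 2)) = α ^ 2 * N := by
      rw [hξ, mul_pow, Real.sq_sqrt (by positivity)]
      field_simp
    have hx' : B a (-s') = 0 := by simp [hs']
    have h1 := h (ξ • a + -s') (by
      rw [mul_sqrt_le_iff hα.le, hax hx', hcross hx' hx']
      refine ⟨by positivity, ?_⟩
      have : B (-s') (-s') = N := by simp [hNdef]
      rw [this]
      nlinarith)
    rw [hcross hs' hx', map_neg, ← hNdef] at h1
    have h2 : N ^ 2 ≤ (σ * ξ * δ) ^ 2 := pow_le_pow_left₀ hN (by linarith) 2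
    have h3 : N ^ 2 * (δ - α ^ 2) ≤ N * (σ ^ 2 * α ^ 2 * δ) := by
      have := mul_le_mul_of_nonneg_right h2 hκ.le
      calc N ^ 2 * (δ - α ^ 2) ≤ (σ * ξ * δ) ^ 2 * (δ - α ^ 2) := this
        _ = σ ^ 2 * δ * (ξ ^ 2 * (δ * (δ - α ^ 2))) := by ring
        _ = N * (σ ^ 2 * α ^ 2 * δ) := by rw [hξ2]; ring
    have h4 : N * (δ - α ^ 2) ≤ σ ^ 2 * α ^ 2 * δ := by
      rcases hN.eq_or_lt with h0 | h0
      · rw [← h0, zero_mul]; positivity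
      · exact le_of_mul_le_mul_left (by linarith) h0
    nlinarith
  · rintro ⟨hσ, hs⟩ x hx
    rw [mul_sqrt_le_iff hα.le] at hx
    obtain ⟨ξ, x', rfl, hx'⟩ := hdecomp x
    rw [hax hx', hcross hx' hx'] at hx
    rw [hcross hs' hx']
    have hσ0 : 0 ≤ σ := nonneg_of_mul_nonneg_left hσ hδ
    have hξ0 : 0 ≤ ξ := nonneg_of_mul_nonneg_left hx.1 hδ
    have hcs := B.apply_sq_le_of_symm hnonneg hsymm s' x'
    have hM := hnonneg x'
    rw [← hNdef] at hcs
    set M := B x' x' with hMdef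
    have h1 : N * (δ - α ^ 2) ≤ σ ^ 2 * α ^ 2 * δ := by linarith
    have h2 : M * α ^ 2 ≤ ξ ^ 2 * (δ - α ^ 2) * δ := by linarith
    have h3 : (N * M) * ((δ - α ^ 2) * α ^ 2) ≤ (σ * ξ * δ) ^ 2 * ((δ - α ^ 2) * α ^ 2) := by
      calc (N * M) * ((δ - α ^ 2) * α ^ 2) = (N * (δ - α ^ 2)) * (M * α ^ 2) := by ring
        _ ≤ (σ ^ 2 * α ^ 2 * δ) * (ξ ^ 2 * (δ - α ^ 2) * δ) := by gcongr
        _ = _ := by ring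
    have h4 : N * M ≤ (σ * ξ * δ) ^ 2 := le_of_mul_le_mul_right h3 (by positivity)
    have h5 := abs_le_of_sq_le_sq (hcs.trans h4) (by positivity)
    linarith [(abs_le.1 h5).1]

end Duality

lemma toBilin'_hessNegLog {n : ℕ} (p : MvPolynomial (Fin n) ℝ) (a u v : Fin n → ℝ) :
    Matrix.toBilin' (hessNegLog p a) u v = localIP p a u v :=
  Matrix.toBilin'_apply _ _ _

lemma sum_mulVec_hessNegLog_mul {n : ℕ} (p : MvPolynomial (Fin n) ℝ) (a s x : Fin n → ℝ) :
    ∑ i, (hessNegLog p a).mulVec s i * x i = localIP p a s x := by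
  simp only [localIP, Matrix.mulVec, dotProduct, Finset.sum_mul]
  rw [Finset.sum_comm]
  refine Finset.sum_congr rfl fun i _ => Finset.sum_congr rfl fun j _ => ?_
  rw [hessNegLog_comm a j i]
  ring

lemma localIP_comm {n : ℕ} (p : MvPolynomial (Fin n) ℝ) (a u v : Fin n → ℝ) :
    localIP p a u v = localIP p a v u := by
  rw [← sum_mulVec_hessNegLog_mul, localIP]
  simp only [Matrix.mulVec, dotProduct, Finset.sum_mul]
  refine Finset.sum_congr rfl fun i _ => Finset.sum_congr rfl fun j _ => ?_
  ring

/-- Proposition 8.10 in RS14.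
For `0 < α < √d` and `e' ∈ Λ₊₊`, the dual cone of `K_{e'}(α)` with respect to the standard
inner product is `{H(e') s : s ∈ K_{e'}(√(d-α²))}`. -/
theorem stmt9 {n d : ℕ} (hd : 1 ≤ d) (p : MvPolynomial (Fin n) ℝ) (e : Fin n → ℝ)
    (hp : IsHyperbolicPoly p e d) (hpe : 0 < MvPolynomial.eval e p)
    (hreg : IsRegularCone p e)
    (α : ℝ) (hα : 0 < α) (hα' : α < Real.sqrt d) :
    ∀ e' ∈ hypConeOpen p e,
      {y : Fin n → ℝ | ∀ x ∈ quadCone p e' α, 0 ≤ ∑ i, y i * x i} =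
        (fun s => (hessNegLog p e').mulVec s) '' quadCone p e' (Real.sqrt ((d : ℝ) - α ^ 2)) := by
  intro a ha
  have hiff := dual_circular_cone_iff (Matrix.toBilin' (hessNegLog p a))
    (fun x => by rw [toBilin'_hessNegLog]; exact localIP_nonneg hp ha x)
    ⟨fun x y => by
      rw [toBilin'_hessNegLog, toBilin'_hessNegLog]
      exact localIP_comm p a x y⟩
    (a := a) (by rw [toBilin'_hessNegLog, localIP_self hp ha]) hα hα'
  simp only [toBilin'_hessNegLog] at hiff
  have hinj : Function.Injective (hessNegLog p a).mulVecLin := by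
    rw [← LinearMap.ker_eq_bot, LinearMap.ker_eq_bot']
    intro v hv
    refine eq_zero_of_localIP_eq_zero hp hreg ha ?_
    rw [← sum_mulVec_hessNegLog_mul, ← Matrix.mulVecLin_apply, hv]
    simp
  ext y
  constructor
  · intro hy
    obtain ⟨s, rfl⟩ := LinearMap.injective_iff_surjective.1 hinj y
    refine ⟨s, (hiff s).1 fun x hx => ?_, rfl⟩
    rw [← sum_mulVec_hessNegLog_mul]
    exact hy x hx
  · rintro ⟨s, hs, rfl⟩ x hx
    rw [sum_mulVec_hessNegLog_mul]
    exact (hiff s).2 hs x hx
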